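/- Let A = {x ↦ σ(x)·c : σ ∈ K, c ∈ G} ⊆ Sym(G). The normalizer of A in the symmetric group Sym(G) has order at most 2l·q³·(q² − 1), where q = p^l for the prime p; equivalently, the index of A in its normalizer in Sym(G) is at most 2l. -/

import Mathlib

/-- The Heisenberg group `H₃(F)` of upper unitriangular 3×3 matrices over `F`,
recorded by the three free entries: `x` in position (1,2), `y` in position (2,3),
`z` in position (1,3). -/
@[ext]
structure Heis (F : Type*) where
  x : F
  y : F
  z : F
deriving DecidableEq

namespace Heis

variable {F : Type*} [Field F]

/-- Multiplication corresponding to the matrix product. -/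
instance : Group (Heis F) where
  mul a b := ⟨a.x + b.x, a.y + b.y, a.z + b.z + a.x * b.y⟩
  one := ⟨0, 0, 0⟩
  inv a := ⟨-a.x, -a.y, -a.z + a.x * a.y⟩
  mul_assoc a b c := Heis.ext
    (show a.x + b.x + c.x = a.x + (b.x + c.x) by ring)
    (show a.y + b.y + c.y = a.y + (b.y + c.y) by ring)
    (show a.z + b.z + a.x * b.y + c.z + (a.x + b.x) * c.y
        = a.z + (b.z + c.z + b.x * c.y) + a.x * (b.y + c.y) by ring)
  one_mul a := Heis.ext
    (show (0 : F) + a.x = a.x by ring)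
    (show (0 : F) + a.y = a.y by ring)
    (show (0 : F) + a.z + 0 * a.y = a.z by ring)
  mul_one a := Heis.ext
    (show a.x + 0 = a.x by ring)
    (show a.y + 0 = a.y by ring)
    (show a.z + 0 + a.x * 0 = a.z by ring)
  inv_mul_cancel a := Heis.ext
    (show -a.x + a.x = 0 by ring)
    (show -a.y + a.y = 0 by ring)
    (show -a.z + a.x * a.y + a.z + -a.x * a.y = 0 by ring)

instance [Fintype F] : Fintype (Heis F) :=
  Fintype.ofEquiv (F × F × F)
    ⟨fun p => ⟨p.1, p.2.1, p.2.2⟩, fun a => (a.x, a.y, a.z), fun _ => rfl, fun _ => rfl⟩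

end Heis

/-- The element `g(x,y,z)` of the Heisenberg group. -/
def gElt {F : Type*} (x y z : F) : Heis F := ⟨x, y, z⟩

/-- The center `Z = {g(0,0,z) : z ∈ F}` of the Heisenberg group, as a set. -/
def Zset (F : Type*) [Field F] : Set (Heis F) := {g : Heis F | g.x = 0 ∧ g.y = 0}

/-- The center `Z` as a subgroup of the Heisenberg group. -/
def Zsub (F : Type*) [Field F] : Subgroup (Heis F) where
  carrier := Zset F
  mul_mem' := fun {a b} ha hb =>
    ⟨show a.x + b.x = 0 by rw [ha.1, hb.1, add_zero],
     show a.y + b.y = 0 by rw [ha.2, hb.2, add_zero]⟩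
  one_mem' := ⟨rfl, rfl⟩
  inv_mem' := fun {a} ha =>
    ⟨show -a.x = 0 by rw [ha.1, neg_zero],
     show -a.y = 0 by rw [ha.2, neg_zero]⟩

/-- `γ_i(α,β) = αβ/2 + (α² − εβ²)i`. -/
def gam {F : Type*} [Field F] (ε i α β : F) : F := α * β / 2 + (α ^ 2 - ε * β ^ 2) * i

/-- `Y_i = {g(α, β, γ_i(α,β)) : (α,β) ≠ (0,0)}`. -/
def Yset {F : Type*} [Field F] (ε i : F) : Set (Heis F) :=
  {g : Heis F | ∃ α β : F, (α, β) ≠ (0, 0) ∧ g = gElt α β (gam ε i α β)}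

/-- `X_i = Y_i ∪ {e}`. -/
def Xset {F : Type*} [Field F] (ε i : F) : Set (Heis F) := Yset ε i ∪ {1}

/-- The map `ρ(M) : G → G` attached to the matrix `M = [[α,β],[εβ,α]]`. -/
def rho {F : Type*} [Field F] (ε α β : F) : Heis F → Heis F := fun g =>
  gElt (α * g.x + ε * β * g.y) (β * g.x + α * g.y)
    (α * β * (g.x ^ 2 / 2 + ε * g.y ^ 2 / 2) + ε * β ^ 2 * g.x * g.y
      + (α ^ 2 - ε * β ^ 2) * g.z)

/-- `K = {ρ(M) : M = [[α,β],[εβ,α]], (α,β) ≠ (0,0)}`, as a set of maps `G → G`. -/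
def Kset {F : Type*} [Field F] (ε : F) : Set (Heis F → Heis F) :=
  {f | ∃ α β : F, (α, β) ≠ (0, 0) ∧ f = rho ε α β}

/-- The family of sets `{e}`, `Z \ {e}`, `Y_i` for `i ∈ F`. -/
def SFam {F : Type*} [Field F] (ε : F) : Set (Set (Heis F)) :=
  insert {1} (insert (Zset F \ {1}) {S | ∃ i : F, S = Yset ε i})

/-- `f` preserves each of the basic sets `{e}`, `Z \ {e}`, `Y_i`:
`hg⁻¹ ∈ S ↔ f(h)f(g)⁻¹ ∈ S`. -/
def Preserves {F : Type*} [Field F] (ε : F) (f : Heis F → Heis F) : Prop :=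
  ∀ S ∈ SFam ε, ∀ g h : Heis F, h * g⁻¹ ∈ S ↔ f h * (f g)⁻¹ ∈ S

/-- The set of permutations of `G` of the form `x ↦ σ(x)·c` with `σ ∈ K`, `c ∈ G`. -/
def Aset {F : Type*} [Field F] (ε : F) : Set (Equiv.Perm (Heis F)) :=
  {f | ∃ σ ∈ Kset ε, ∃ c : Heis F, ∀ x : Heis F, f x = σ x * c}

/-- The operation `ψ` on `F ∪ {∞}`, with `∞` encoded as `none`. -/
def psi {F : Type*} [Field F] [DecidableEq F] (ε : F) : Option F → Option F → Option F
  | none, j => j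
  | some i, none => some i
  | some i, some j => if i + j = 0 then none else some ((i * j + ε / 16) / (i + j))

/-- `Y_k` for `k ∈ F ∪ {∞}`, where `Y_∞ = Z \ {e}`. -/
def YInf {F : Type*} [Field F] (ε : F) : Option F → Set (Heis F)
  | some i => Yset ε i
  | none => Zset F \ {1}

/-!
Let `E = F[√ε]`, a field with `q²` elements. Reading `(x, y)` as `x + y√ε` identifies `G ⧸ Z` with
`E`, and `K` with `Eˣ` acting on `E` by multiplication. Suppose `f` normalizes `A`.

The conjugate of a right translation by `f` has the form `x ↦ m • x * c`, and its order divides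
`q³`; so `m ^ q³ = 1`, which forces `m = 1` because `q³` is prime to `q² - 1 = |Eˣ|`. Hence `f`
normalizes the right translations, which makes it an endomorphism `g` of `G` followed by right
translation by `f 1`, and `g` normalizes `K`. An additive map of `E` that carries multiplications
to multiplications is `v ↦ τ v * u` with `τ` a field endomorphism, so this is how `g` acts on
`G ⧸ Z`. Finally `g` commutes with `-1 ∈ K`, hence preserves the set of elements that `-1` inverts;
this set meets every coset of `Z` exactly once and generates `G`, so `g` is determined by `u` and
`τ`. Thus `f` is determined by `f 1`, `u` and `τ`, for which there are `q³`, `q² - 1` and at most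
`2l` choices.
-/

lemma sub_iterate_eq_pow_mul {X R : Type*} [Ring R] {φ : X → R} {a : X → X} {m : R}
    (ha : ∀ x y, φ (a x) - φ (a y) = m * (φ x - φ y)) (n : ℕ) (x y : X) :
    φ (a^[n] x) - φ (a^[n] y) = m ^ n * (φ x - φ y) := by
  induction n with
  | zero => simp
  | succ n ih =>
    rw [Function.iterate_succ_apply', Function.iterate_succ_apply', ha, ih, pow_succ', mul_assoc]

lemma exists_monoidHom_of_map_mul_right {G H : Type*} [Monoid G] [Group H] {f : G → H}
    (hf : ∀ c, ∃ d, ∀ x, f (x * c) = f x * d) : ∃ g : G →* H, ∀ x, f x = g x * f 1 := by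
  have hmul (x c : G) : f (x * c) = f x * (f 1)⁻¹ * f c := by
    obtain ⟨d, hd⟩ := hf c
    have hc : f c = f 1 * d := by simpa using hd 1
    rw [hd, hc, mul_assoc, inv_mul_cancel_left]
  exact ⟨MonoidHom.mk' (fun x => f x * (f 1)⁻¹) fun a b => by simp only [hmul, mul_assoc],
    fun x => by simp⟩

lemma semiconj_of_eq_mul_right {G H : Type*} [Monoid G] [Group H] {f : G → H} {g : G →* H}
    (hg : ∀ x, f x = g x * f 1) {σ : G →* G} {σ' : H →* H} {d : H}
    (hσ : ∀ x, f (σ x) = σ' (f x) * d) : Function.Semiconj g σ σ' := by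
  intro x
  have h1 : f 1 = σ' (f 1) * d := by simpa using hσ 1
  refine mul_right_cancel (b := f 1) ?_
  calc g (σ x) * f 1 = σ' (g x * f 1) * d := by rw [← hg, ← hg, hσ]
    _ = σ' (g x) * f 1 := by rw [map_mul, mul_assoc, ← h1]

lemma exists_ringHom_mul_unit {R D : Type*} [NonAssocSemiring R] [DivisionRing D]
    {h : R →+ D} (h0 : h ≠ 0) (hmul : ∀ m, ∃ m', ∀ v, h (m * v) = m' * h v) :
    ∃ (u : Dˣ) (τ : R →+* D), ∀ v, h v = τ v * u := by
  choose μ hμ using hmul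
  have hμ1 (v : R) : h v = μ v * h 1 := by simpa using hμ v 1
  have hu : h 1 ≠ 0 := fun h1 => h0 (AddMonoidHom.ext fun v => by simp [hμ1 v, h1])
  have cancel {a b : D} (hab : a * h 1 = b * h 1) : a = b := mul_right_cancel₀ hu hab
  exact ⟨Units.mk0 (h 1) hu,
    { toFun := μ
      map_one' := cancel (by rw [← hμ1, one_mul])
      map_mul' := fun m v => cancel (by rw [← hμ1, hμ, hμ1 v, mul_assoc])
      map_zero' := cancel (by rw [← hμ1, map_zero, zero_mul])
      map_add' := fun v w => cancel (by rw [← hμ1, map_add, hμ1 v, hμ1 w, add_mul]) }, hμ1⟩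

lemma natCard_ringHom_le_of_natCard_eq_pow {K R : Type*} [Field K] [Finite K] [CommRing R]
    [IsDomain R] {p n : ℕ} (hp : p.Prime) (hK : Nat.card K = p ^ n) :
    Nat.card (K →+* R) ≤ n := by
  obtain _ | ⟨⟨φ⟩⟩ := isEmpty_or_nonempty (K →+* R)
  · simp
  have : Fact p.Prime := ⟨hp⟩
  have : CharP K p := by
    have := Fintype.ofFinite K
    exact charP_of_card_eq_prime_pow (Fintype.card_eq_nat_card.trans hK)
  have : CharP R p := charP_of_injective_ringHom φ.injective p
  let _ := ZMod.algebra K p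
  let _ := ZMod.algebra R p
  have e : (K →+* R) ≃ (K →ₐ[ZMod p] R) :=
    { toFun := fun τ => { τ with commutes' := RingHom.congr_fun (RingHom.ext_zmod
        (τ.comp (algebraMap (ZMod p) K)) (algebraMap (ZMod p) R)) }
      invFun := fun τ => τ
      left_inv := fun _ => rfl
      right_inv := fun _ => rfl }
  have hn : Module.finrank (ZMod p) K = n := by
    refine Nat.pow_right_injective hp.two_le ?_
    simpa [hK] using (Module.natCard_eq_pow_finrank (K := ZMod p) (V := K)).symm
  rw [Nat.card_congr e, ← hn]
  exact card_algHom_le_finrank (ZMod p) K R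

/-- The quadratic extension `F[√ε]`, in which the matrix `[[α, β], [εβ, α]]` is `α + β√ε`. -/
abbrev QuadExt {F : Type*} [Zero F] (ε : F) : Type _ := QuadraticAlgebra F ε 0

lemma QuadExt.natCard {F : Type*} [Zero F] (ε : F) : Nat.card (QuadExt ε) = Nat.card F ^ 2 := by
  rw [Nat.card_congr (QuadraticAlgebra.equivProd ε 0), Nat.card_prod, sq]

instance {F : Type*} [Zero F] [Finite F] (ε : F) : Finite (QuadExt ε) :=
  Finite.of_equiv _ (QuadraticAlgebra.equivProd ε 0).symm

namespace Heis

open scoped commutatorElement QuadraticAlgebra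

lemma natCard {F : Type*} : Nat.card (Heis F) = Nat.card F ^ 3 := by
  have e : Heis F ≃ F × F × F :=
    ⟨fun a => (a.x, a.y, a.z), fun p => ⟨p.1, p.2.1, p.2.2⟩, fun _ => rfl, fun _ => rfl⟩
  rw [Nat.card_congr e, Nat.card_prod, Nat.card_prod]
  ring

variable {F : Type*} [Field F]

section Coordinates

@[simp] lemma mul_x (a b : Heis F) : (a * b).x = a.x + b.x := rfl

@[simp] lemma mul_y (a b : Heis F) : (a * b).y = a.y + b.y := rfl

@[simp] lemma mul_z (a b : Heis F) : (a * b).z = a.z + b.z + a.x * b.y := rfl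

@[simp] lemma inv_x (a : Heis F) : a⁻¹.x = -a.x := rfl

@[simp] lemma inv_y (a : Heis F) : a⁻¹.y = -a.y := rfl

@[simp] lemma inv_z (a : Heis F) : a⁻¹.z = -a.z + a.x * a.y := rfl

end Coordinates

variable {ε : F}

section Projection

/-- The projection of the Heisenberg group onto its abelianization, identified with `F[√ε]`. -/
def proj (ε : F) (g : Heis F) : QuadExt ε := ⟨g.x, g.y⟩

lemma proj_one : proj ε (1 : Heis F) = 0 := rfl

lemma proj_mul (a b : Heis F) : proj ε (a * b) = proj ε a + proj ε b := rfl

lemma proj_commutator (a b : Heis F) : proj ε ⁅a, b⁆ = 0 := by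
  ext <;> simp [proj, commutatorElement_def]

lemma proj_surjective (ε : F) : Function.Surjective (proj ε) := fun v => ⟨⟨v.re, v.im, 0⟩, rfl⟩

end Projection

section Lift

/-- The matrix exponential of `[[0, x, 0], [0, 0, y], [0, 0, 0]]`, where `v = x + y√ε`: the lift of
`v` to the Heisenberg group that is inverted by `-1`. -/
def lift (v : QuadExt ε) : Heis F := ⟨v.re, v.im, v.re * v.im / 2⟩

lemma proj_lift (v : QuadExt ε) : proj ε (lift v) = v := rfl

lemma lift_proj_mul_commutator (g : Heis F) :
    lift (proj ε g) * ⁅lift (⟨g.z - g.x * g.y / 2, 0⟩ : QuadExt ε), lift (⟨0, 1⟩ : QuadExt ε)⁆ =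
      g := by
  ext <;> simp [lift, proj, commutatorElement_def]

end Lift

section AbelianizationMap

lemma proj_map_lift_proj (g : Heis F →* Heis F) (x : Heis F) :
    proj ε (g (lift (proj ε x))) = proj ε (g x) := by
  conv_rhs => rw [← lift_proj_mul_commutator (ε := ε) x, map_mul, map_commutatorElement,
    proj_mul, proj_commutator, add_zero]

/-- The additive map that an endomorphism of the Heisenberg group induces on the abelianization. -/
def abelianizationMap (ε : F) (g : Heis F →* Heis F) : QuadExt ε →+ QuadExt ε :=
  AddMonoidHom.mk' (fun v => proj ε (g (lift v))) fun v w => by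
    rw [← proj_mul, ← map_mul, ← proj_map_lift_proj g (lift v * lift w), proj_mul, proj_lift,
      proj_lift]

lemma abelianizationMap_proj (g : Heis F →* Heis F) (x : Heis F) :
    abelianizationMap ε g (proj ε x) = proj ε (g x) :=
  proj_map_lift_proj g x

lemma abelianizationMap_ne_zero {g : Heis F →* Heis F} (hg : Function.Surjective g) :
    abelianizationMap ε g ≠ 0 := by
  intro h
  obtain ⟨x, hx⟩ := hg (lift (1 : QuadExt ε))
  have h1 : (0 : QuadExt ε) = 1 := by
    rw [← proj_lift 1, ← hx, ← abelianizationMap_proj, h, AddMonoidHom.zero_apply]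
  exact zero_ne_one h1

end AbelianizationMap

section Action

variable [NeZero (2 : F)]

/-- The action of `F[√ε]` on the Heisenberg group by the endomorphisms `ρ(M)`; its restriction to
`F[√ε]ˣ` is `K`. -/
instance : MulDistribMulAction (QuadExt ε) (Heis F) where
  smul m g := rho ε m.re m.im g
  one_smul g := by
    change rho ε 1 0 g = g
    ext <;> simp [rho, gElt]
  mul_smul m n g := by
    change rho ε (m * n).re (m * n).im g = rho ε m.re m.im (rho ε n.re n.im g)
    ext <;> simp only [rho, gElt, QuadraticAlgebra.re_mul, QuadraticAlgebra.im_mul] <;> field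
  smul_one m := by
    change rho ε m.re m.im ⟨0, 0, 0⟩ = ⟨0, 0, 0⟩
    simp [rho, gElt]
  smul_mul m a b := by
    change rho ε m.re m.im (a * b) = rho ε m.re m.im a * rho ε m.re m.im b
    ext <;> simp only [rho, gElt, mul_x, mul_y, mul_z] <;> field

lemma smul_eq_rho (m : QuadExt ε) (g : Heis F) : m • g = rho ε m.re m.im g := rfl

lemma proj_smul (m : QuadExt ε) (g : Heis F) : proj ε (m • g) = m * proj ε g := by
  ext <;> simp only [proj, smul_eq_rho, rho, gElt, QuadraticAlgebra.re_mul,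
    QuadraticAlgebra.im_mul]
  ring

lemma neg_one_smul_eq (g : Heis F) : (-1 : QuadExt ε) • g = ⟨-g.x, -g.y, g.z⟩ := by
  simp [smul_eq_rho, rho, gElt]

lemma neg_one_smul_eq_inv_iff {g : Heis F} :
    (-1 : QuadExt ε) • g = g⁻¹ ↔ lift (proj ε g) = g := by
  simp only [neg_one_smul_eq, Heis.ext_iff, inv_x, inv_y, inv_z, lift, proj, true_and]
  rw [div_eq_iff two_ne_zero]
  constructor <;> intro h <;> linear_combination -h

lemma abelianizationMap_mul {g : Heis F →* Heis F} {m m' : QuadExt ε}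
    (h : ∀ x, g (m • x) = m' • g x) (v : QuadExt ε) :
    abelianizationMap ε g (m * v) = m' * abelianizationMap ε g v := by
  obtain ⟨x, rfl⟩ := proj_surjective ε v
  rw [← proj_smul, abelianizationMap_proj, abelianizationMap_proj, h, proj_smul]

lemma map_lift {g : Heis F →* Heis F} (hg : ∀ x, g ((-1 : QuadExt ε) • x) = (-1 : QuadExt ε) • g x)
    (v : QuadExt ε) : g (lift v) = lift (abelianizationMap ε g v) := by
  have hv : (-1 : QuadExt ε) • lift v = (lift v)⁻¹ := neg_one_smul_eq_inv_iff.2 rfl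
  exact (neg_one_smul_eq_inv_iff.1 (by rw [← hg, hv, map_inv])).symm

lemma monoidHom_ext {g₁ g₂ : Heis F →* Heis F}
    (h : abelianizationMap ε g₁ = abelianizationMap ε g₂)
    (h₁ : ∀ x, g₁ ((-1 : QuadExt ε) • x) = (-1 : QuadExt ε) • g₁ x)
    (h₂ : ∀ x, g₂ ((-1 : QuadExt ε) • x) = (-1 : QuadExt ε) • g₂ x) : g₁ = g₂ := by
  ext1 x
  rw [← lift_proj_mul_commutator (ε := ε) x]
  simp only [map_mul, map_commutatorElement, map_lift h₁, map_lift h₂, h]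

end Action

section Semiaffine

variable [NeZero (2 : F)]

/-- `f` is an endomorphism of the Heisenberg group followed by right translation by `c`, where the
endomorphism commutes with `-1 ∈ K` and acts on the abelianization by `v ↦ τ v * u`. -/
def IsSemiaffine (f : Heis F → Heis F) (c : Heis F) (u : (QuadExt ε)ˣ)
    (τ : QuadExt ε →+* QuadExt ε) : Prop :=
  ∃ g : Heis F →* Heis F, (∀ x, f x = g x * c) ∧
    (∀ x, g ((-1 : QuadExt ε) • x) = (-1 : QuadExt ε) • g x) ∧
    ∀ v, abelianizationMap ε g v = τ v * u

lemma IsSemiaffine.unique {f₁ f₂ : Heis F → Heis F} {c : Heis F} {u : (QuadExt ε)ˣ}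
    {τ : QuadExt ε →+* QuadExt ε} (h₁ : IsSemiaffine f₁ c u τ) (h₂ : IsSemiaffine f₂ c u τ) :
    f₁ = f₂ := by
  obtain ⟨g₁, hf₁, hneg₁, hτ₁⟩ := h₁
  obtain ⟨g₂, hf₂, hneg₂, hτ₂⟩ := h₂
  have hg : g₁ = g₂ :=
    monoidHom_ext (AddMonoidHom.ext fun v => (hτ₁ v).trans (hτ₂ v).symm) hneg₁ hneg₂
  exact funext fun x => by rw [hf₁, hf₂, hg]

lemma natCard_le_of_forall_isSemiaffine [Finite F] {N : Set (Equiv.Perm (Heis F))}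
    (hN : ∀ f ∈ N, ∃ (u : (QuadExt ε)ˣ) (τ : QuadExt ε →+* QuadExt ε), IsSemiaffine f (f 1) u τ) :
    Nat.card N ≤
      Nat.card (Heis F) * (Nat.card (QuadExt ε)ˣ * Nat.card (QuadExt ε →+* QuadExt ε)) := by
  have := Fintype.ofFinite F
  have : Finite (QuadExt ε →+* QuadExt ε) := DFunLike.finite _
  choose u τ hf using fun f : N => hN f f.2
  have hinj : Function.Injective fun f : N => (f.1 1, u f, τ f) := by
    intro f₁ f₂ h
    simp only [Prod.mk.injEq] at h
    obtain ⟨h1, hu, hτ⟩ := h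
    have hf₂ := hf f₂
    rw [← h1, ← hu, ← hτ] at hf₂
    exact Subtype.ext (DFunLike.coe_injective ((hf f₁).unique hf₂))
  rw [← Nat.card_prod, ← Nat.card_prod]
  exact Nat.card_le_card_of_injective _ hinj

end Semiaffine

section Normalizer

variable [NeZero (2 : F)] [Fact (∀ r : F, r ^ 2 ≠ ε + 0 * r)]

lemma mem_Aset_iff {a : Equiv.Perm (Heis F)} :
    a ∈ Aset ε ↔ ∃ (m : (QuadExt ε)ˣ) (c : Heis F), ∀ x, a x = m • x * c := by
  constructor
  · rintro ⟨_, ⟨α, β, hαβ, rfl⟩, c, ha⟩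
    have hm : (⟨α, β⟩ : QuadExt ε) ≠ 0 := fun h =>
      hαβ (Prod.ext (congrArg QuadraticAlgebra.re h) (congrArg QuadraticAlgebra.im h))
    exact ⟨Units.mk0 _ hm, c, ha⟩
  · rintro ⟨m, c, ha⟩
    refine ⟨_, ⟨(m : QuadExt ε).re, (m : QuadExt ε).im, fun h => m.ne_zero ?_, rfl⟩, c, ha⟩
    exact QuadraticAlgebra.ext (congrArg Prod.fst h) (congrArg Prod.snd h)

lemma mulRight_mem_Aset (c : Heis F) : Equiv.mulRight c ∈ Aset ε :=
  mem_Aset_iff.2 ⟨1, c, fun x => by simp⟩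

lemma toPerm_mem_Aset (m : (QuadExt ε)ˣ) : MulAction.toPerm m ∈ Aset (F := F) ε :=
  mem_Aset_iff.2 ⟨m, 1, fun x => by simp⟩

lemma eq_one_of_pow_natCard_eq_one [Finite F] {a : Equiv.Perm (Heis F)} {m : (QuadExt ε)ˣ}
    {c : Heis F} (ha : ∀ x, a x = m • x * c) (hpow : a ^ Nat.card (Heis F) = 1) : m = 1 := by
  have hsub (x y : Heis F) : proj ε (a x) - proj ε (a y) = m * (proj ε x - proj ε y) := by
    rw [ha, ha, Units.smul_def, Units.smul_def, proj_mul, proj_mul, proj_smul, proj_smul]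
    ring
  have hm : (m : QuadExt ε) ^ Nat.card F ^ 3 = 1 := by
    have h := sub_iterate_eq_pow_mul hsub (Nat.card (Heis F)) (lift (1 : QuadExt ε)) 1
    rw [← Equiv.Perm.coe_pow, hpow, natCard] at h
    simpa [proj_lift, proj_one] using h.symm
  have := Fintype.ofFinite (QuadExt ε)
  refine Units.ext ?_
  calc (m : QuadExt ε) = (m : QuadExt ε) ^ Fintype.card (QuadExt ε) ^ 2 :=
        (FiniteField.pow_card_pow 2 _).symm
    _ = ((m : QuadExt ε) ^ Nat.card F ^ 3) ^ Nat.card F := by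
        rw [Fintype.card_eq_nat_card, QuadExt.natCard]
        ring
    _ = 1 := by rw [hm, one_pow]

lemma map_neg_one_smul {g : Heis F →* Heis F} (h0 : abelianizationMap ε g ≠ 0) {m : QuadExt ε}
    (hm : ∀ x, g ((-1 : QuadExt ε) • x) = m • g x) (x : Heis F) :
    g ((-1 : QuadExt ε) • x) = (-1 : QuadExt ε) • g x := by
  obtain ⟨v, hv⟩ := DFunLike.ne_iff.1 h0
  have hm1 : m = -1 := mul_right_cancel₀ hv <| by
    rw [← abelianizationMap_mul hm, neg_one_mul, neg_one_mul, map_neg]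
  rw [hm, hm1]

variable {f : Equiv.Perm (Heis F)}

lemma exists_map_mul_right [Finite F] (hf : ∀ a ∈ Aset ε, f * a * f⁻¹ ∈ Aset ε)
    (c : Heis F) : ∃ d, ∀ x, f (x * c) = f x * d := by
  obtain ⟨m, d, hd⟩ := mem_Aset_iff.1 (hf _ (mulRight_mem_Aset c))
  have hm : m = 1 := eq_one_of_pow_natCard_eq_one hd (by
    rw [conj_pow, Equiv.pow_mulRight, pow_card_eq_one', Equiv.mulRight_one, mul_one,
      mul_inv_cancel])
  exact ⟨d, fun x => by simpa [hm] using hd (f x)⟩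

lemma exists_map_smul_eq (hf : ∀ a ∈ Aset ε, f * a * f⁻¹ ∈ Aset ε) (m : (QuadExt ε)ˣ) :
    ∃ (m' : (QuadExt ε)ˣ) (d : Heis F), ∀ x, f (m • x) = m' • f x * d := by
  obtain ⟨m', d, hd⟩ := mem_Aset_iff.1 (hf _ (toPerm_mem_Aset m))
  exact ⟨m', d, fun x => by simpa using hd (f x)⟩

lemma exists_monoidHom [Finite F] (hf : ∀ a ∈ Aset ε, f * a * f⁻¹ ∈ Aset ε) :
    ∃ g : Heis F →* Heis F, (∀ x, f x = g x * f 1) ∧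
      ∀ m : (QuadExt ε)ˣ, ∃ m' : (QuadExt ε)ˣ, ∀ x, g (m • x) = m' • g x := by
  obtain ⟨g, hg⟩ := exists_monoidHom_of_map_mul_right (exists_map_mul_right hf)
  refine ⟨g, hg, fun m => ?_⟩
  obtain ⟨m', d, hd⟩ := exists_map_smul_eq hf m
  exact ⟨m', semiconj_of_eq_mul_right hg (σ := MulDistribMulAction.toMonoidHom _ m)
    (σ' := MulDistribMulAction.toMonoidHom _ m') hd⟩

lemma exists_isSemiaffine [Finite F] (hf : ∀ a ∈ Aset ε, f * a * f⁻¹ ∈ Aset ε) :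
    ∃ (u : (QuadExt ε)ˣ) (τ : QuadExt ε →+* QuadExt ε), IsSemiaffine f (f 1) u τ := by
  obtain ⟨g, hg, hK⟩ := exists_monoidHom hf
  have hsurj : Function.Surjective g := fun y => by
    obtain ⟨x, hx⟩ := f.surjective (y * f 1)
    exact ⟨x, mul_right_cancel ((hg x).symm.trans hx)⟩
  have h0 : abelianizationMap ε g ≠ 0 := abelianizationMap_ne_zero hsurj
  have hmul (m : QuadExt ε) : ∃ m', ∀ v,
      abelianizationMap ε g (m * v) = m' * abelianizationMap ε g v := by
    obtain rfl | hm := eq_or_ne m 0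
    · exact ⟨0, fun v => by simp⟩
    · obtain ⟨m', hm'⟩ := hK (Units.mk0 m hm)
      exact ⟨m', abelianizationMap_mul hm'⟩
  obtain ⟨u, τ, hτ⟩ := exists_ringHom_mul_unit h0 hmul
  obtain ⟨m', hm'⟩ := hK (-1)
  exact ⟨u, τ, g, hg, map_neg_one_smul h0 hm', hτ⟩

end Normalizer

end Heis

/-- Let `A = {x ↦ σ(x)·c : σ ∈ K, c ∈ G} ⊆ Sym(G)`. The normalizer of `A`
in the symmetric group `Sym(G)` has order at most `2l·q³·(q² − 1)`, where `q = p^l` for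
the prime `p`. -/
theorem statement_16 {F : Type*} [Field F] [Fintype F] (p l : ℕ) (hp : p.Prime)
    (hl : 0 < l) (hq : Fintype.card F = p ^ l)
    (hodd : Odd (Fintype.card F)) (ε : F) (hε : ¬IsSquare ε) :
    Nat.card {f : Equiv.Perm (Heis F) |
        ∀ a : Equiv.Perm (Heis F), a ∈ Aset ε ↔ f * a * f⁻¹ ∈ Aset ε}
      ≤ 2 * l * (Fintype.card F ^ 3 * (Fintype.card F ^ 2 - 1)) := by
  have : Fact (∀ r : F, r ^ 2 ≠ ε + 0 * r) := ⟨fun r hr => hε ⟨r, by linear_combination -hr⟩⟩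
  have : NeZero (2 : F) := ⟨Ring.two_ne_zero fun h => Nat.not_even_iff_odd.2 hodd
    (Nat.even_iff.2 (FiniteField.even_card_of_char_two h))⟩
  rw [Fintype.card_eq_nat_card] at hq ⊢
  calc
    _ ≤ Nat.card (Heis F) * (Nat.card (QuadExt ε)ˣ * Nat.card (QuadExt ε →+* QuadExt ε)) :=
      Heis.natCard_le_of_forall_isSemiaffine fun _ hf =>
        Heis.exists_isSemiaffine fun a => (hf a).1
    _ ≤ Nat.card (Heis F) * (Nat.card (QuadExt ε)ˣ * (2 * l)) := by
      gcongr
      exact natCard_ringHom_le_of_natCard_eq_pow hp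
        (by rw [QuadExt.natCard, hq, ← pow_mul, mul_comm])
    _ = 2 * l * (Nat.card F ^ 3 * (Nat.card F ^ 2 - 1)) := by
      rw [Heis.natCard, Nat.card_units, QuadExt.natCard]
      ring
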